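/- Under the hypotheses of the finite-dimensional symmetric representation (inequalities on the j⁽ⁱ⁾ and N ∈ ℤ_{>0}), the representation of sR(4) on 𝓕_N is irreducible: the only ℂ-linear subspaces of 𝓕_N invariant under all five operators C₁₂, C₁₂₃, C₂₃, C₃₄, C₂₃₄ are {0} and 𝓕_N itself. -/

import Mathlib

noncomputable section

open Finset

/-! ### The finite-dimensional space `𝓕_N` and the symmetric representation -/

/-- The index set `{(n,p) : n,p ≥ 0, n+p ≤ N}` of the basis of `𝓕_N`. -/
abbrev SN (N : ℕ) : Type := {q : ℤ × ℤ // 0 ≤ q.1 ∧ 0 ≤ q.2 ∧ q.1 + q.2 ≤ (N : ℤ)}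

/-- The space `𝓕_N`, with basis `|n,p⟩`, `n,p ≥ 0`, `n+p ≤ N`. -/
abbrev FN (N : ℕ) : Type := SN N →₀ ℂ

/-- The basis vector `|n,p⟩` if `(n,p)` is admissible, `0` otherwise. -/
def ket (N : ℕ) (n p : ℤ) : FN N :=
  if h : 0 ≤ n ∧ 0 ≤ p ∧ n + p ≤ (N : ℤ) then Finsupp.single ⟨(n, p), h⟩ 1 else 0

/-- The endomorphism of `𝓕_N` sending `|n,p⟩` to `f n p`. -/
def mkOp (N : ℕ) (f : ℤ → ℤ → FN N) : Module.End ℂ (FN N) :=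
  Finsupp.lift (FN N) ℂ (SN N) (fun q => f q.1.1 q.1.2)

/-- `μ_n = (n−j⁽¹⁾−j⁽²⁾−1)(n−j⁽¹⁾−j⁽²⁾)`. -/
def muN (j1 j2 : ℝ) (n : ℤ) : ℝ := ((n : ℝ) - j1 - j2 - 1) * ((n : ℝ) - j1 - j2)

/-- `μ̂_p = (p−j⁽⁰⁾−j⁽⁴⁾−1)(p−j⁽⁰⁾−j⁽⁴⁾)`. -/
def muP (j0 j4 : ℝ) (p : ℤ) : ℝ := ((p : ℝ) - j0 - j4 - 1) * ((p : ℝ) - j0 - j4)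

/-- `μ⁽ⁱ⁾ = j⁽ⁱ⁾(j⁽ⁱ⁾+1)`. -/
def mcc (j : ℝ) : ℝ := j * (j + 1)

/-- The off-diagonal coefficient `ψ_{n,p}` (nonnegative square root). -/
def psiR (j0 j1 j2 j3 j4 : ℝ) (N : ℕ) (n p : ℤ) : ℝ :=
  Real.sqrt (((n : ℝ) * (2*j1 + 1 - n) * (2*j2 + 1 - n) * (2*j1 + 2*j2 + 2 - n) *
      ((N : ℝ) - n - p + 2*j3 + 2) * ((N : ℝ) - n - p + 1) *
      ((p : ℝ) - n - N + 2*j1 + 2*j2 + 1) * ((n : ℝ) - p - N + 2*j0 + 2*j4)) /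
    ((2*j1 + 2*j2 + 2 - 2*(n : ℝ))^2 * (2*j1 + 2*j2 + 1 - 2*(n : ℝ)) *
      (2*j1 + 2*j2 + 3 - 2*(n : ℝ))))

/-- The off-diagonal coefficient `ρ_{n,p}` (nonnegative square root). -/
def rhoR (j0 j1 j2 j3 j4 : ℝ) (N : ℕ) (n p : ℤ) : ℝ :=
  Real.sqrt (((p : ℝ) * (2*j4 + 1 - p) * (2*j0 + 1 - p) * (2*j4 + 2*j0 + 2 - p) *
      ((N : ℝ) - n - p + 2*j3 + 2) * ((N : ℝ) - n - p + 1) *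
      ((p : ℝ) - n - N + 2*j1 + 2*j2) * ((n : ℝ) - p - N + 2*j0 + 2*j4 + 1)) /
    ((2*j0 + 2*j4 + 2 - 2*(p : ℝ))^2 * (2*j0 + 2*j4 + 1 - 2*(p : ℝ)) *
      (2*j0 + 2*j4 + 3 - 2*(p : ℝ))))

/-- The diagonal coefficient `ψ⁰⁰_{n,p}`. -/
def psi00R (j0 j1 j2 j3 j4 : ℝ) (n p : ℤ) : ℝ :=
  (muN j1 j2 n + mcc j2 - mcc j1) * (muP j0 j4 p - mcc j3 - muN j1 j2 n) /
    (2 * muN j1 j2 n) + mcc j2 + mcc j3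

/-- The diagonal coefficient `ρ⁰⁰_{n,p}`. -/
def rho00R (j0 j1 j2 j3 j4 : ℝ) (n p : ℤ) : ℝ :=
  (muP j0 j4 p + mcc j3 - muN j1 j2 n) * (mcc j0 - mcc j4 - muP j0 j4 p) /
    (2 * muP j0 j4 p) + mcc j3 + mcc j4

/-- `φ^H_{n,p} = ((μ̂_p−μ⁽⁴⁾+μ⁽⁰⁾)/(2μ̂_p))ψ_{n,p}`. -/
def phiH (j0 j1 j2 j3 j4 : ℝ) (N : ℕ) (n p : ℤ) : ℝ :=
  (muP j0 j4 p - mcc j4 + mcc j0) / (2 * muP j0 j4 p) * psiR j0 j1 j2 j3 j4 N n p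

/-- `φ^V_{n,p} = ((μ_n+μ⁽¹⁾−μ⁽²⁾)/(2μ_n))ρ_{n,p}`. -/
def phiV (j0 j1 j2 j3 j4 : ℝ) (N : ℕ) (n p : ℤ) : ℝ :=
  (muN j1 j2 n + mcc j1 - mcc j2) / (2 * muN j1 j2 n) * rhoR j0 j1 j2 j3 j4 N n p

/-- The diagonal coefficient `φ⁰⁰_{n,p}` of `C₂₃₄`. -/
def phi00R (j0 j1 j2 j3 j4 : ℝ) (n p : ℤ) : ℝ :=
  (muN j1 j2 n + mcc j1 - mcc j2) / (2 * muN j1 j2 n) * rho00R j0 j1 j2 j3 j4 n p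
    - ((muN j1 j2 n - mcc j1 - mcc j2 - mcc j0) * muN j1 j2 n
        + mcc j0 * (mcc j1 - mcc j2)) / (2 * muN j1 j2 n)

/-- `φ^D_{n,p} = −ψ_{n,p}ρ_{n−1,p}/((n−p+a₁₂−a₁₂₃+j⁽³⁾)(n−p+a₁₂−a₁₂₃−j⁽³⁾−1))`
with `a₁₂ = −j⁽¹⁾−j⁽²⁾−1`, `a₁₂₃ = −j⁽⁰⁾−j⁽⁴⁾−1`. -/
def phiD (j0 j1 j2 j3 j4 : ℝ) (N : ℕ) (n p : ℤ) : ℝ :=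
  -(psiR j0 j1 j2 j3 j4 N n p * rhoR j0 j1 j2 j3 j4 N (n - 1) p) /
    (((n : ℝ) - p + (-j1 - j2 - 1) - (-j0 - j4 - 1) + j3) *
      ((n : ℝ) - p + (-j1 - j2 - 1) - (-j0 - j4 - 1) - j3 - 1))

/-- `φ^A_{n,p} = −ψ_{n,p}ρ_{n,p}/((n+p+a₁₂+a₁₂₃+j⁽³⁾+1)(n+p+a₁₂+a₁₂₃−j⁽³⁾))`. -/
def phiA (j0 j1 j2 j3 j4 : ℝ) (N : ℕ) (n p : ℤ) : ℝ :=
  -(psiR j0 j1 j2 j3 j4 N n p * rhoR j0 j1 j2 j3 j4 N n p) /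
    (((n : ℝ) + p + (-j1 - j2 - 1) + (-j0 - j4 - 1) + j3 + 1) *
      ((n : ℝ) + p + (-j1 - j2 - 1) + (-j0 - j4 - 1) - j3))

/-- The diagonal operator `C₁₂`. -/
def opC12 (j0 j1 j2 j3 j4 : ℝ) (N : ℕ) : Module.End ℂ (FN N) :=
  mkOp N (fun n p => (muN j1 j2 n : ℂ) • ket N n p)

/-- The diagonal operator `C₁₂₃`. -/
def opC123 (j0 j1 j2 j3 j4 : ℝ) (N : ℕ) : Module.End ℂ (FN N) :=
  mkOp N (fun n p => (muP j0 j4 p : ℂ) • ket N n p)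

/-- The tridiagonal operator `C₂₃`. -/
def opC23 (j0 j1 j2 j3 j4 : ℝ) (N : ℕ) : Module.End ℂ (FN N) :=
  mkOp N (fun n p =>
    (psiR j0 j1 j2 j3 j4 N (n + 1) p : ℂ) • ket N (n + 1) p
    + (psi00R j0 j1 j2 j3 j4 n p : ℂ) • ket N n p
    + (psiR j0 j1 j2 j3 j4 N n p : ℂ) • ket N (n - 1) p)

/-- The tridiagonal operator `C₃₄`. -/
def opC34 (j0 j1 j2 j3 j4 : ℝ) (N : ℕ) : Module.End ℂ (FN N) :=
  mkOp N (fun n p =>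
    (rhoR j0 j1 j2 j3 j4 N n (p + 1) : ℂ) • ket N n (p + 1)
    + (rho00R j0 j1 j2 j3 j4 n p : ℂ) • ket N n p
    + (rhoR j0 j1 j2 j3 j4 N n p : ℂ) • ket N n (p - 1))

/-- The nine-term operator `C₂₃₄`. -/
def opC234 (j0 j1 j2 j3 j4 : ℝ) (N : ℕ) : Module.End ℂ (FN N) :=
  mkOp N (fun n p =>
    (phiD j0 j1 j2 j3 j4 N (n + 1) (p + 1) : ℂ) • ket N (n + 1) (p + 1)
    + (phiV j0 j1 j2 j3 j4 N n (p + 1) : ℂ) • ket N n (p + 1)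
    + (phiA j0 j1 j2 j3 j4 N n (p + 1) : ℂ) • ket N (n - 1) (p + 1)
    + (phiH j0 j1 j2 j3 j4 N (n + 1) p : ℂ) • ket N (n + 1) p
    + (phi00R j0 j1 j2 j3 j4 n p : ℂ) • ket N n p
    + (phiH j0 j1 j2 j3 j4 N n p : ℂ) • ket N (n - 1) p
    + (phiA j0 j1 j2 j3 j4 N (n + 1) p : ℂ) • ket N (n + 1) (p - 1)
    + (phiV j0 j1 j2 j3 j4 N n p : ℂ) • ket N n (p - 1)
    + (phiD j0 j1 j2 j3 j4 N n p : ℂ) • ket N (n - 1) (p - 1))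

lemma ket_eq (N : ℕ) (q : SN N) : ket N q.1.1 q.1.2 = Finsupp.single q 1 := by
  have h := q.2
  unfold ket
  rw [dif_pos h]

lemma ket_apply (N : ℕ) (n p : ℤ) (q : SN N) :
    ket N n p q = if n = q.1.1 ∧ p = q.1.2 then 1 else 0 := by
  unfold ket
  split_ifs with h h' h'
  · obtain ⟨⟨a, b⟩, hq⟩ := q
    obtain ⟨rfl, rfl⟩ := h'
    simp
  · obtain ⟨⟨a, b⟩, hq⟩ := q
    rw [Finsupp.single_apply, if_neg]
    intro e
    apply h'
    simpa using e
  · exfalso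
    apply h
    rw [h'.1, h'.2]
    exact q.2
  · rfl

lemma mkOp_single (N : ℕ) (f : ℤ → ℤ → FN N) (q : SN N) (c : ℂ) :
    mkOp N f (Finsupp.single q c) = c • f q.1.1 q.1.2 := by
  simp [mkOp]

lemma mkOp_ket (N : ℕ) (f : ℤ → ℤ → FN N) (n p : ℤ)
    (h : 0 ≤ n ∧ 0 ≤ p ∧ n + p ≤ (N : ℤ)) :
    mkOp N f (ket N n p) = f n p := by
  have := ket_eq N ⟨(n, p), h⟩
  simp only at this
  rw [this, mkOp_single, one_smul]

/-- A diagonal operator acts diagonally on coordinates. -/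
lemma diag_apply (N : ℕ) (d : ℤ → ℤ → ℂ) (x : FN N) (q : SN N) :
    mkOp N (fun n p => d n p • ket N n p) x q = d q.1.1 q.1.2 * x q := by
  induction x using Finsupp.induction_linear with
  | zero => simp
  | add f g hf hg => rw [map_add, Finsupp.add_apply, hf, hg, Finsupp.add_apply, mul_add]
  | single r c =>
    rw [mkOp_single, ket_eq, Finsupp.smul_apply, Finsupp.smul_apply, Finsupp.single_apply,
      Finsupp.single_apply]
    split_ifs with h
    · subst h; simp [mul_comm]
    · simp

lemma proj_mem (N : ℕ) (U : Submodule ℂ (FN N)) (d e : ℤ → ℤ → ℂ)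
    (hd : ∀ x ∈ U, mkOp N (fun n p => d n p • ket N n p) x ∈ U)
    (he : ∀ x ∈ U, mkOp N (fun n p => e n p • ket N n p) x ∈ U)
    (hsep : ∀ q r : SN N, q ≠ r → d q.1.1 q.1.2 ≠ d r.1.1 r.1.2 ∨ e q.1.1 q.1.2 ≠ e r.1.1 r.1.2)
    (q : SN N) : ∀ (k : ℕ) (x : FN N), x.support.card ≤ k → x ∈ U → x q ≠ 0 →
      Finsupp.single q 1 ∈ U := by
  intro k
  induction k with
  | zero =>
    intro x hk _ hq
    exfalso
    have : x.support = ∅ := Finset.card_eq_zero.mp (Nat.le_zero.mp hk)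
    rw [Finsupp.support_eq_empty] at this
    simp [this] at hq
  | succ k ih =>
    intro x hk hx hq
    by_cases hr : ∃ r, r ≠ q ∧ x r ≠ 0
    · obtain ⟨r, hrq, hxr⟩ := hr
      have key : ∀ d : ℤ → ℤ → ℂ, (∀ x ∈ U, mkOp N (fun n p => d n p • ket N n p) x ∈ U) →
          d q.1.1 q.1.2 ≠ d r.1.1 r.1.2 → Finsupp.single q 1 ∈ U := by
        intro d hd hne
        set y : FN N := mkOp N (fun n p => d n p • ket N n p) x - d r.1.1 r.1.2 • x with hy
        have hyc : ∀ s, y s = (d s.1.1 s.1.2 - d r.1.1 r.1.2) * x s := by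
          intro s
          rw [hy, Finsupp.sub_apply, diag_apply, Finsupp.smul_apply, smul_eq_mul, sub_mul]
        apply ih y
        · have hlt : y.support ⊂ x.support := by
            rw [Finset.ssubset_iff_of_subset]
            · refine ⟨r, by simpa using hxr, ?_⟩
              simp [hyc]
            · intro s hs
              rw [Finsupp.mem_support_iff, hyc] at hs
              rw [Finsupp.mem_support_iff]
              exact right_ne_zero_of_mul hs
          have := Finset.card_lt_card hlt
          omega
        · exact U.sub_mem (hd x hx) (U.smul_mem _ hx)
        · rw [hyc]
          exact mul_ne_zero (sub_ne_zero.mpr hne) hq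
      rcases hsep q r hrq.symm with h | h
      · exact key d hd h
      · exact key e he h
    · push Not at hr
      have : Finsupp.single q 1 = (x q)⁻¹ • x := by
        ext s
        by_cases hs : s = q
        · subst hs; simp [hq]
        · rw [Finsupp.smul_apply, hr s hs, Finsupp.single_apply, if_neg (Ne.symm hs)]; simp
      rw [this]
      exact U.smul_mem _ hx

lemma psi_pos (j0 j1 j2 j3 j4 : ℝ) (N : ℕ)
    (h12 : j1 ≥ j2) (h24 : j2 ≥ j4) (h04 : j0 ≥ j4) (h3 : j3 ≥ 0) (hN : (N : ℝ) ≤ 2 * j4)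
    (n p : ℤ) (hn : 1 ≤ n) (hp : 0 ≤ p) (hnp : n + p ≤ N) :
    0 < psiR j0 j1 j2 j3 j4 N n p := by
  have hn' : (1 : ℝ) ≤ n := by exact_mod_cast hn
  have hp' : (0 : ℝ) ≤ p := by exact_mod_cast hp
  have hnp' : (n : ℝ) + p ≤ N := by exact_mod_cast hnp
  apply Real.sqrt_pos.mpr
  have a1 : 0 < (n : ℝ) := by linarith
  have a2 : 0 < 2*j1 + 1 - n := by linarith
  have a3 : 0 < 2*j2 + 1 - n := by linarith
  have a4 : 0 < 2*j1 + 2*j2 + 2 - n := by linarith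
  have a5 : 0 < (N : ℝ) - n - p + 2*j3 + 2 := by linarith
  have a6 : 0 < (N : ℝ) - n - p + 1 := by linarith
  have a7 : 0 < (p : ℝ) - n - N + 2*j1 + 2*j2 + 1 := by linarith
  have a8 : 0 < (n : ℝ) - p - N + 2*j0 + 2*j4 := by linarith
  have b1 : 0 < 2*j1 + 2*j2 + 2 - 2*(n : ℝ) := by linarith
  have b2 : 0 < 2*j1 + 2*j2 + 1 - 2*(n : ℝ) := by linarith
  have b3 : 0 < 2*j1 + 2*j2 + 3 - 2*(n : ℝ) := by linarith
  positivity

lemma rho_pos (j0 j1 j2 j3 j4 : ℝ) (N : ℕ)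
    (h12 : j1 ≥ j2) (h24 : j2 ≥ j4) (h04 : j0 ≥ j4) (h3 : j3 ≥ 0) (hN : (N : ℝ) ≤ 2 * j4)
    (n p : ℤ) (hn : 0 ≤ n) (hp : 1 ≤ p) (hnp : n + p ≤ N) :
    0 < rhoR j0 j1 j2 j3 j4 N n p := by
  have hn' : (0 : ℝ) ≤ n := by exact_mod_cast hn
  have hp' : (1 : ℝ) ≤ p := by exact_mod_cast hp
  have hnp' : (n : ℝ) + p ≤ N := by exact_mod_cast hnp
  apply Real.sqrt_pos.mpr
  have a1 : 0 < (p : ℝ) := by linarith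
  have a2 : 0 < 2*j4 + 1 - p := by linarith
  have a3 : 0 < 2*j0 + 1 - p := by linarith
  have a4 : 0 < 2*j4 + 2*j0 + 2 - p := by linarith
  have a5 : 0 < (N : ℝ) - n - p + 2*j3 + 2 := by linarith
  have a6 : 0 < (N : ℝ) - n - p + 1 := by linarith
  have a7 : 0 < (p : ℝ) - n - N + 2*j1 + 2*j2 := by linarith
  have a8 : 0 < (n : ℝ) - p - N + 2*j0 + 2*j4 + 1 := by linarith
  have b1 : 0 < 2*j0 + 2*j4 + 2 - 2*(p : ℝ) := by linarith
  have b2 : 0 < 2*j0 + 2*j4 + 1 - 2*(p : ℝ) := by linarith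
  have b3 : 0 < 2*j0 + 2*j4 + 3 - 2*(p : ℝ) := by linarith
  positivity

/-- Separation of eigenvalues: `x ↦ (x - a - b - 1)(x - a - b)` is injective on `[0, a + b]`. -/
lemma quad_inj (a b x y : ℝ) (hx : x ≤ a + b) (hy : y ≤ a + b)
    (h : (x - a - b - 1) * (x - a - b) = (y - a - b - 1) * (y - a - b)) : x = y := by
  have : (x - y) * (x + y - 2 * a - 2 * b - 1) = 0 := by linarith
  rcases mul_eq_zero.mp this with h | h
  · linarith
  · linarith

/-- Irreducibility of the finite-dimensional symmetric representation of `sR(4)` on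
`𝓕_N`: the only subspaces invariant under `C₁₂`, `C₁₂₃`, `C₂₃`, `C₃₄`, `C₂₃₄` are `{0}`
and `𝓕_N`. -/
theorem stmt11 (j0 j1 j2 j3 j4 : ℝ) (N : ℕ)
    (h12 : j1 ≥ j2) (h24 : j2 ≥ j4) (h04 : j0 ≥ j4)
    (h0 : j0 ≥ 0) (h1 : j1 ≥ 0) (h2 : j2 ≥ 0) (h3 : j3 ≥ 0) (h4 : j4 ≥ 0)
    (hup : j1 + j2 + j0 + j4 ≥ j3) (hlow : j3 ≥ j1 + j2 + j0 - j4)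
    (hN : 0 < N) (hNdef : (N : ℝ) = j1 + j2 - j3 + j4 + j0) :
    ∀ U : Submodule ℂ (FN N),
      (∀ x ∈ U, opC12 j0 j1 j2 j3 j4 N x ∈ U) →
      (∀ x ∈ U, opC123 j0 j1 j2 j3 j4 N x ∈ U) →
      (∀ x ∈ U, opC23 j0 j1 j2 j3 j4 N x ∈ U) →
      (∀ x ∈ U, opC34 j0 j1 j2 j3 j4 N x ∈ U) →
      (∀ x ∈ U, opC234 j0 j1 j2 j3 j4 N x ∈ U) →
      U = ⊥ ∨ U = ⊤ := by
  intro U i12 i123 i23 i34 _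
  have hN2 : (N : ℝ) ≤ 2 * j4 := by linarith
  have proj : ∀ (n p : ℤ) (h : 0 ≤ n ∧ 0 ≤ p ∧ n + p ≤ (N : ℤ)), ∀ x ∈ U,
      x ⟨(n, p), h⟩ ≠ 0 → ket N n p ∈ U := by
    intro n p h x hx hne
    have e := ket_eq N ⟨(n, p), h⟩
    simp only at e
    rw [e]
    refine proj_mem N U (fun n _ => (muN j1 j2 n : ℂ)) (fun _ p => (muP j0 j4 p : ℂ))
      i12 i123 ?_ _ _ x le_rfl hx hne
    intro q r hqr
    by_contra! hc
    apply hqr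
    obtain ⟨c1, c2⟩ := hc
    obtain ⟨⟨n, p⟩, hn, hp, hnp⟩ := q
    obtain ⟨⟨n', p'⟩, hn', hp', hnp'⟩ := r
    simp only at c1 c2 hn hp hnp hn' hp' hnp'
    have c1' : muN j1 j2 n = muN j1 j2 n' := by exact_mod_cast c1
    have c2' : muP j0 j4 p = muP j0 j4 p' := by exact_mod_cast c2
    have b1 : (n : ℝ) ≤ N := by exact_mod_cast (by omega : n ≤ (N : ℤ))
    have b2 : (p : ℝ) ≤ N := by exact_mod_cast (by omega : p ≤ (N : ℤ))
    have b3 : (n' : ℝ) ≤ N := by exact_mod_cast (by omega : n' ≤ (N : ℤ))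
    have b4 : (p' : ℝ) ≤ N := by exact_mod_cast (by omega : p' ≤ (N : ℤ))
    have e1 := quad_inj j1 j2 n n' (by linarith) (by linarith) c1'
    have e2 := quad_inj j0 j4 p p' (by linarith) (by linarith) c2'
    have e1' : n = n' := by exact_mod_cast e1
    have e2' : p = p' := by exact_mod_cast e2
    subst e1' e2'
    rfl
  have nup : ∀ n p : ℤ, 0 ≤ n → 0 ≤ p → n + 1 + p ≤ N → ket N n p ∈ U → ket N (n + 1) p ∈ U := by
    intro n p hn hp hnp hk
    have hm := i23 _ hk
    rw [opC23, mkOp_ket N _ n p ⟨hn, hp, by omega⟩] at hm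
    refine proj (n + 1) p ⟨by omega, hp, hnp⟩ _ hm ?_
    have := psi_pos j0 j1 j2 j3 j4 N h12 h24 h04 h3 hN2 (n + 1) p (by omega) hp hnp
    have t : ¬ (n - 1 = n + 1) := by omega
    simp [ket_apply, this.ne', t]
  have ndn : ∀ n p : ℤ, 0 ≤ n → 0 ≤ p → n + 1 + p ≤ N → ket N (n + 1) p ∈ U → ket N n p ∈ U := by
    intro n p hn hp hnp hk
    have hm := i23 _ hk
    rw [opC23, mkOp_ket N _ (n + 1) p ⟨by omega, hp, by omega⟩] at hm
    refine proj n p ⟨by omega, hp, by omega⟩ _ hm ?_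
    have := psi_pos j0 j1 j2 j3 j4 N h12 h24 h04 h3 hN2 (n + 1) p (by omega) hp hnp
    have t : ¬ (n + 1 + 1 = n) := by omega
    simp [ket_apply, this.ne', t]
  have pup : ∀ n p : ℤ, 0 ≤ n → 0 ≤ p → n + (p + 1) ≤ N → ket N n p ∈ U →
      ket N n (p + 1) ∈ U := by
    intro n p hn hp hnp hk
    have hm := i34 _ hk
    rw [opC34, mkOp_ket N _ n p ⟨hn, hp, by omega⟩] at hm
    refine proj n (p + 1) ⟨by omega, by omega, hnp⟩ _ hm ?_
    have := rho_pos j0 j1 j2 j3 j4 N h12 h24 h04 h3 hN2 n (p + 1) hn (by omega) hnp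
    have t : ¬ (p - 1 = p + 1) := by omega
    simp [ket_apply, this.ne', t]
  have pdn : ∀ n p : ℤ, 0 ≤ n → 0 ≤ p → n + (p + 1) ≤ N → ket N n (p + 1) ∈ U →
      ket N n p ∈ U := by
    intro n p hn hp hnp hk
    have hm := i34 _ hk
    rw [opC34, mkOp_ket N _ n (p + 1) ⟨hn, by omega, by omega⟩] at hm
    refine proj n p ⟨by omega, by omega, by omega⟩ _ hm ?_
    have := rho_pos j0 j1 j2 j3 j4 N h12 h24 h04 h3 hN2 n (p + 1) hn (by omega) hnp
    have t : ¬ (p + 1 + 1 = p) := by omega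
    simp [ket_apply, this.ne', t]
  have linkn : ∀ (n : ℕ) (p : ℤ), 0 ≤ p → (n : ℤ) + p ≤ N →
      (ket N n p ∈ U ↔ ket N 0 p ∈ U) := by
    intro n p hp
    induction n with
    | zero => intro _; simp
    | succ n ih =>
      intro hnp
      push_cast at hnp ⊢
      rw [← ih (by omega)]
      exact ⟨ndn n p (by omega) hp hnp, nup n p (by omega) hp hnp⟩
  have linkp : ∀ (p : ℕ), (p : ℤ) ≤ N → (ket N 0 p ∈ U ↔ ket N 0 0 ∈ U) := by
    intro p
    induction p with
    | zero => intro _; simp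
    | succ p ih =>
      intro hnp
      push_cast at hnp ⊢
      rw [← ih (by omega)]
      exact ⟨pdn 0 p le_rfl (by omega) (by omega), pup 0 p le_rfl (by omega) (by omega)⟩
  have link : ∀ q : SN N, (ket N q.1.1 q.1.2 ∈ U ↔ ket N 0 0 ∈ U) := by
    rintro ⟨⟨n, p⟩, hn, hp, hnp⟩
    simp only at hn hp hnp ⊢
    lift n to ℕ using hn
    lift p to ℕ using hp
    rw [linkn n p (by omega) hnp, linkp p (by omega)]
  by_cases hU : U = ⊥
  · exact Or.inl hU
  · right
    obtain ⟨x, hx, hx0⟩ := U.ne_bot_iff.mp hU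
    obtain ⟨q, hq⟩ := Finsupp.ne_iff.mp hx0
    have hk : ket N q.1.1 q.1.2 ∈ U := proj q.1.1 q.1.2 q.2 x hx hq
    have hv := (link q).mp hk
    rw [eq_top_iff]
    intro y _
    induction y using Finsupp.induction_linear with
    | zero => exact U.zero_mem
    | add f g hf hg => exact U.add_mem (hf trivial) (hg trivial)
    | single r c =>
      have := U.smul_mem c ((link r).mpr hv)
      rw [ket_eq] at this
      simpa using this
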